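/- Let 1 < p ≤ q < ∞ with p' = p/(p−1), and let u, v be non-negative measurable functions on (0,∞). There exists a constant C > 0 such that (∫₀^{∞} ( u(t) ∫₀^{t} F(s) ds )^q dt)^{1/q} ≤ C (∫₀^{∞} ( v(t) F(t) )^p dt)^{1/p} for every non-negative measurable function F on (0,∞), if and only if sup_{s>0} (∫_{s}^{∞} u(t)^q dt)^{1/q} (∫₀^{s} v(t)^{−p'} dt)^{1/p'} < ∞. -/

import Mathlib

open MeasureTheory Set ENNReal

/-! Necessity: test the inequality on finite-valued `g ≤ v ^ (-p')` cut off at `s`. Such `g` satisfy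
`(v g) ^ p ≤ g`, so with `I = ∫ g` the inequality reads `ν [s, ∞) ^ (1/q) * I ≤ C * I ^ (1/p)`;
divide by `I ^ (1/p)` and let `g` increase to `v ^ (-p')`.

Sufficiency: cut the line into the dyadic levels `2 ^ k < Hf ≤ 2 ^ (k + 1)` of the cumulative
integral `Hf`. For `t` in such a level, at least `2 ^ (k - 1)` of the mass of `f` before `t` lies in
that level and the preceding one, so Hölder's inequality bounds `2 ^ (k - 1)` by the `L ^ p` mass of
`v f` there and the integral of `v ^ (-p')` up to `t`, which Muckenhoupt's condition trades for
`ν [t, ∞) ^ (-1/q)`. This bounds `2 ^ (k q)` times the `ν`-measure of the level by the `q / p`-th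
power of that mass; as `q / p ≥ 1`, the powers may be summed inside, and every level is counted
twice.
-/

open scoped NNReal

section Exponents

lemma rpow_eq_mul_rpow_sub_one (x : ℝ≥0∞) {r : ℝ} (hr : 1 ≤ r) : x ^ r = x * x ^ (r - 1) := by
  conv_lhs => rw [← add_sub_cancel 1 r]
  rw [ENNReal.rpow_add_of_nonneg 1 (r - 1) zero_le_one (sub_nonneg.2 hr), ENNReal.rpow_one]

lemma tsum_rpow_le_rpow_tsum {ι : Type*} (a : ι → ℝ≥0∞) {r : ℝ} (hr : 1 ≤ r) :
    ∑' i, a i ^ r ≤ (∑' i, a i) ^ r := by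
  calc ∑' i, a i ^ r
      ≤ ∑' i, a i * (∑' j, a j) ^ (r - 1) := by
        refine ENNReal.tsum_le_tsum fun i => ?_
        rw [rpow_eq_mul_rpow_sub_one _ hr]
        gcongr
        exact ENNReal.le_tsum i
    _ = (∑' i, a i) ^ r := by rw [ENNReal.tsum_mul_right, ← rpow_eq_mul_rpow_sub_one _ hr]

lemma mul_rpow_le_self_of_le_rpow_neg {p p' : ℝ} (hpp : p.HolderConjugate p') {x y : ℝ≥0∞}
    (h : x ≤ y ^ (-p')) : (y * x) ^ p ≤ x := by
  have hx : x ^ (p - 1) ≤ (y ^ p)⁻¹ := by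
    calc x ^ (p - 1) ≤ (y ^ (-p')) ^ (p - 1) := ENNReal.rpow_le_rpow h hpp.sub_one_pos.le
      _ = (y ^ p)⁻¹ := by
        rw [← ENNReal.rpow_mul, ← ENNReal.rpow_neg]
        congr 1
        linear_combination -hpp.mul_eq_add
  calc (y * x) ^ p = y ^ p * (x * x ^ (p - 1)) := by
        rw [ENNReal.mul_rpow_of_nonneg _ _ hpp.nonneg, rpow_eq_mul_rpow_sub_one x hpp.lt.le]
    _ ≤ y ^ p * (x * (y ^ p)⁻¹) := by gcongr
    _ = x * (y ^ p * (y ^ p)⁻¹) := by ring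
    _ ≤ x := mul_le_of_le_one_right' (ENNReal.mul_inv_le_one _)

end Exponents

section Integrals

variable {α : Type*} [MeasurableSpace α]

lemma lintegral_le_weighted_Lp_mul_Lq {μ : Measure α} {p p' : ℝ} (hpp : p.HolderConjugate p')
    {v f : α → ℝ≥0∞} (hv : AEMeasurable v μ) (hf : AEMeasurable f μ)
    (hvf : ∫⁻ x, (v x * f x) ^ p ∂μ ≠ ⊤) (hW : ∫⁻ x, v x ^ (-p') ∂μ ≠ ⊤) :
    ∫⁻ x, f x ∂μ ≤ (∫⁻ x, (v x * f x) ^ p ∂μ) ^ (1 / p) *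
      (∫⁻ x, v x ^ (-p') ∂μ) ^ (1 / p') := by
  have hcancel : f =ᵐ[μ] (fun x => v x * f x) * fun x => (v x)⁻¹ := by
    filter_upwards [ae_lt_top' ((hv.mul hf).pow_const p) hvf,
      ae_lt_top' (hv.pow_const (-p')) hW] with x hvfx hWx
    have hv0 : v x ≠ 0 := by
      intro h
      simp [h, ENNReal.zero_rpow_of_neg (neg_lt_zero.2 hpp.symm.pos)] at hWx
    rcases eq_or_ne (f x) 0 with hf0 | hf0
    · simp [hf0]
    have hvt : v x ≠ ⊤ := by
      intro h
      simp [h, ENNReal.top_mul hf0, ENNReal.top_rpow_of_pos hpp.pos] at hvfx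
    rw [Pi.mul_apply, mul_right_comm, ENNReal.mul_inv_cancel hv0 hvt, one_mul]
  rw [lintegral_congr_ae hcancel]
  simp_rw [ENNReal.rpow_neg, ← ENNReal.inv_rpow]
  exact ENNReal.lintegral_mul_le_Lp_mul_Lq μ hpp (hv.mul hf) hv.inv

lemma lintegral_rpow_le_tsum_dyadic {ν : Measure α} {g : α → ℝ≥0∞} (hg : Measurable g)
    (hgt : ∀ᵐ t ∂ν, g t ≠ ⊤) {q : ℝ} (hq : 0 < q) :
    ∫⁻ t, g t ^ q ∂ν ≤ ∑' k : ℤ, (2 ^ (k + 1)) ^ q * ν (g ⁻¹' Ioc (2 ^ k) (2 ^ (k + 1))) := by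
  have hmeas (k : ℤ) : MeasurableSet (g ⁻¹' Ioc (2 ^ k) (2 ^ (k + 1))) := hg measurableSet_Ioc
  calc ∫⁻ t, g t ^ q ∂ν
      ≤ ∫⁻ t, ∑' k : ℤ,
          (g ⁻¹' Ioc (2 ^ k) (2 ^ (k + 1))).indicator (fun _ => (2 ^ (k + 1)) ^ q) t ∂ν := by
        refine lintegral_mono_ae (hgt.mono fun t ht => ?_)
        rcases eq_or_ne (g t) 0 with h0 | h0
        · simp [h0, ENNReal.zero_rpow_of_pos hq]
        obtain ⟨k, hk⟩ := ENNReal.exists_mem_Ioc_zpow h0 ht one_lt_two ENNReal.ofNat_ne_top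
        refine le_trans ?_ (ENNReal.le_tsum k)
        rw [indicator_of_mem (mem_preimage.2 hk)]
        exact ENNReal.rpow_le_rpow hk.2 hq.le
    _ = ∑' k : ℤ, (2 ^ (k + 1)) ^ q * ν (g ⁻¹' Ioc (2 ^ k) (2 ^ (k + 1))) := by
        rw [lintegral_tsum fun k => (measurable_const.indicator (hmeas k)).aemeasurable]
        simp_rw [lintegral_indicator_const (hmeas _)]

lemma tsum_setLIntegral_preimage_Ioc_le {μ : Measure α} {g : α → ℝ≥0∞} (hg : Measurable g)
    {c : ℤ → ℝ≥0∞} (hc : Monotone c) (h : α → ℝ≥0∞) :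
    ∑' k, ∫⁻ s in g ⁻¹' Ioc (c (k - 1)) (c (k + 1)), h s ∂μ ≤ 2 * ∫⁻ s, h s ∂μ := by
  set b : ℤ → ℝ≥0∞ := fun k => ∫⁻ s in g ⁻¹' Ioc (c k) (c (k + 1)), h s ∂μ
  have hb : ∑' k, b k ≤ ∫⁻ s, h s ∂μ := by
    have hdisj : Pairwise (Function.onFun Disjoint fun k => g ⁻¹' Ioc (c k) (c (k + 1))) :=
      fun i j hij => (hc.pairwise_disjoint_on_Ioc_succ hij).preimage g
    rw [← lintegral_iUnion (fun k => hg measurableSet_Ioc) hdisj]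
    exact setLIntegral_le_lintegral _ _
  calc ∑' k, ∫⁻ s in g ⁻¹' Ioc (c (k - 1)) (c (k + 1)), h s ∂μ
      ≤ ∑' k, (b (k - 1) + b k) := by
        refine ENNReal.tsum_le_tsum fun k => ?_
        rw [← Ioc_union_Ioc_eq_Ioc (hc (sub_one_lt k).le) (hc (lt_add_one k).le), preimage_union]
        refine (lintegral_union_le _ _ _).trans_eq ?_
        simp only [b, sub_add_cancel]
    _ = ∑' k, b k + ∑' k, b k := by
        rw [ENNReal.tsum_add, ← (Equiv.subRight (1 : ℤ)).tsum_eq b]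
        rfl
    _ ≤ 2 * ∫⁻ s, h s ∂μ := by
        rw [two_mul]
        gcongr

lemma exists_measurable_lintegral_between {μ : Measure α} [SigmaFinite μ] {w : α → ℝ≥0∞}
    {L : ℝ≥0∞} (hL : L < ∫⁻ x, w x ∂μ) :
    ∃ g : α → ℝ≥0, Measurable g ∧ (∀ x, (g x : ℝ≥0∞) ≤ w x) ∧
      L < ∫⁻ x, g x ∂μ ∧ ∫⁻ x, g x ∂μ ≠ ⊤ := by
  simp_rw [lintegral_eq_nnreal, lt_iSup_iff] at hL
  obtain ⟨φ, hφw, hLφ⟩ := hL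
  rw [← SimpleFunc.lintegral_eq_lintegral] at hLφ
  obtain ⟨g, hgφ, hgt, hLg⟩ := SimpleFunc.exists_lt_lintegral_simpleFunc_of_lt_lintegral hLφ
  exact ⟨g, g.measurable, fun x => (ENNReal.coe_le_coe.2 (hgφ x)).trans (hφw x), hLg, hgt.ne⟩

end Integrals

section Order

variable {α : Type*} [LinearOrder α] [TopologicalSpace α] [OrderTopology α]
  [SecondCountableTopology α] [MeasurableSpace α]

lemma measure_le_of_forall_measure_Ici_le {μ : Measure α} {E : Set α} {c : ℝ≥0∞}
    (h : ∀ t ∈ E, μ (Ici t) ≤ c) : μ E ≤ c := by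
  let S : Set α := upperClosure E
  have : OrdConnected S := (upperClosure E).upper.ordConnected
  have hanti : Antitone fun t : S => Ici (t : α) := fun _ _ hst => Ici_subset_Ici.2 hst
  calc μ E ≤ μ (⋃ t : S, Ici (t : α)) :=
        measure_mono fun t ht => mem_iUnion.2 ⟨⟨t, subset_upperClosure ht⟩, self_mem_Ici⟩
    _ = ⨆ t : S, μ (Ici (t : α)) := hanti.measure_iUnion
    _ ≤ c := iSup_le fun ⟨_, hs⟩ =>
        let ⟨t, htE, hts⟩ := mem_upperClosure.1 hs
        (measure_mono (Ici_subset_Ici.2 hts)).trans (h t htE)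

lemma measure_le_of_forall_measure_Iic_le {μ : Measure α} {E : Set α} {c : ℝ≥0∞}
    (h : ∀ t ∈ E, μ (Iic t) ≤ c) : μ E ≤ c :=
  measure_le_of_forall_measure_Ici_le (α := αᵒᵈ) h

lemma setLIntegral_le_of_forall_Iic_le [OpensMeasurableSpace α] {μ : Measure α} {f : α → ℝ≥0∞}
    {E : Set α} {c : ℝ≥0∞} (h : ∀ t ∈ E, ∫⁻ s in Iic t, f s ∂μ ≤ c) : ∫⁻ s in E, f s ∂μ ≤ c :=
  (withDensity_apply_le f E).trans <| measure_le_of_forall_measure_Iic_le fun t ht =>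
    (withDensity_apply f measurableSet_Iic).trans_le (h t ht)

end Order

section Hardy

variable {α : Type*} [Preorder α] [MeasurableSpace α]

/-- The Hardy operator of `μ`: it sends `f` to its cumulative integral over the closed rays
`Iic t`. Closed rays are what makes the theory insensitive to atoms. -/
noncomputable def hardyOperator (μ : Measure α) (f : α → ℝ≥0∞) (t : α) : ℝ≥0∞ :=
  ∫⁻ s in Iic t, f s ∂μ

/-- The weighted Hardy inequality with constant `C`: the Hardy operator of `μ` maps `L^p (v^p μ)`
to `L^q ν` with norm at most `C`. The outer weight of the classical inequality is absorbed
in `ν`, and only finite-valued functions are tested. -/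
def HardyInequality (p q : ℝ) (μ ν : Measure α) (v : α → ℝ≥0∞) (C : ℝ≥0∞) : Prop :=
  ∀ F : α → ℝ≥0, Measurable F →
    (∫⁻ t, hardyOperator μ (fun s => F s) t ^ q ∂ν) ^ (1 / q) ≤
      C * (∫⁻ t, (v t * F t) ^ p ∂μ) ^ (1 / p)

/-- The constant whose finiteness is Muckenhoupt's condition, with `p'` the exponent conjugate to
that of the inner space `L^p (v^p μ)`. -/
noncomputable def muckenhouptConstant (p' q : ℝ) (μ ν : Measure α) (v : α → ℝ≥0∞) : ℝ≥0∞ :=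
  ⨆ s, ν (Ici s) ^ (1 / q) * hardyOperator μ (fun t => v t ^ (-p')) s ^ (1 / p')

lemma hardyOperator_monotone (μ : Measure α) (f : α → ℝ≥0∞) : Monotone (hardyOperator μ f) :=
  fun _ _ hst => lintegral_mono_set (Iic_subset_Iic.2 hst)

lemma le_muckenhouptConstant (p' q : ℝ) (μ ν : Measure α) (v : α → ℝ≥0∞) (s : α) :
    ν (Ici s) ^ (1 / q) * hardyOperator μ (fun t => v t ^ (-p')) s ^ (1 / p') ≤
      muckenhouptConstant p' q μ ν v :=
  le_iSup (fun s => ν (Ici s) ^ (1 / q) * hardyOperator μ (fun t => v t ^ (-p')) s ^ (1 / p')) s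

lemma measure_Ici_eq_zero_of_hardyOperator_eq_top {μ ν : Measure α} {v : α → ℝ≥0∞} {p' q : ℝ}
    (hq : 0 < q) (hp' : 0 < p') (hA : muckenhouptConstant p' q μ ν v ≠ ⊤) {t : α}
    (hW : hardyOperator μ (fun s => v s ^ (-p')) t = ⊤) : ν (Ici t) = 0 := by
  by_contra hν
  have hle := le_muckenhouptConstant p' q μ ν v t
  have hν' : ν (Ici t) ^ (1 / q) ≠ 0 := by simp [ENNReal.rpow_eq_zero_iff, hν, hq.le]
  rw [hW, ENNReal.top_rpow_of_pos (by positivity), ENNReal.mul_top hν', top_le_iff] at hle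
  exact hA hle

end Hardy

section Necessity

variable {α : Type*} [Preorder α] [TopologicalSpace α] [OrderClosedTopology α] [MeasurableSpace α]
  [OpensMeasurableSpace α] {μ ν : Measure α} {v : α → ℝ≥0∞} {p p' q : ℝ} {C : ℝ≥0∞}

lemma rpow_measure_Ici_mul_hardyOperator_le (f : α → ℝ≥0∞) (hq : 0 < q) (s : α) :
    ν (Ici s) ^ (1 / q) * hardyOperator μ f s ≤
      (∫⁻ t, hardyOperator μ f t ^ q ∂ν) ^ (1 / q) := by
  rw [one_div, ENNReal.le_rpow_inv_iff hq, ENNReal.mul_rpow_of_nonneg _ _ hq.le,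
    ENNReal.rpow_inv_rpow hq.ne', mul_comm, ← setLIntegral_const]
  calc ∫⁻ _ in Ici s, hardyOperator μ f s ^ q ∂ν
      ≤ ∫⁻ t in Ici s, hardyOperator μ f t ^ q ∂ν :=
        setLIntegral_mono' measurableSet_Ici fun t ht =>
          ENNReal.rpow_le_rpow (hardyOperator_monotone μ f ht) hq.le
    _ ≤ ∫⁻ t, hardyOperator μ f t ^ q ∂ν := setLIntegral_le_lintegral _ _

lemma HardyInequality.mul_rpow_lintegral_le (hpp : p.HolderConjugate p') (hq : 0 < q)
    (hC : HardyInequality p q μ ν v C) {g : α → ℝ≥0} (hg : Measurable g)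
    (hgv : ∀ x, (g x : ℝ≥0∞) ≤ v x ^ (-p')) {s : α} (hg0 : ∫⁻ x in Iic s, g x ∂μ ≠ 0)
    (hgt : ∫⁻ x in Iic s, g x ∂μ ≠ ⊤) :
    ν (Ici s) ^ (1 / q) * (∫⁻ x in Iic s, g x ∂μ) ^ (1 / p') ≤ C := by
  set I := ∫⁻ x in Iic s, g x ∂μ with hI
  set F : α → ℝ≥0 := (Iic s).indicator g with hF
  have hF_left : hardyOperator μ (fun x => F x) s = I :=
    setLIntegral_congr_fun measurableSet_Iic fun x hx => by simp only [hF, indicator_of_mem hx]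
  have hF_right : ∫⁻ x, (v x * F x) ^ p ∂μ ≤ I := by
    rw [hI, ← lintegral_indicator measurableSet_Iic]
    refine lintegral_mono fun x => ?_
    by_cases hx : x ∈ Iic s
    · simpa only [hF, indicator_of_mem hx] using mul_rpow_le_self_of_le_rpow_neg hpp (hgv x)
    · simp [hF, indicator_of_notMem hx, ENNReal.zero_rpow_of_pos hpp.pos]
  have htest : ν (Ici s) ^ (1 / q) * I ≤ C * I ^ (1 / p) := by
    calc ν (Ici s) ^ (1 / q) * I
        ≤ (∫⁻ t, hardyOperator μ (fun x => F x) t ^ q ∂ν) ^ (1 / q) :=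
          hF_left ▸ rpow_measure_Ici_mul_hardyOperator_le _ hq s
      _ ≤ C * (∫⁻ x, (v x * F x) ^ p ∂μ) ^ (1 / p) := hC F (hg.indicator measurableSet_Iic)
      _ ≤ C * I ^ (1 / p) := by have := hpp.pos; gcongr
  have hsplit : I = I ^ (1 / p') * I ^ (1 / p) := by
    rw [← ENNReal.rpow_add _ _ hg0 hgt, one_div, one_div, hpp.symm.inv_add_inv_eq_one,
      ENNReal.rpow_one]
  have hIp0 : I ^ (1 / p) ≠ 0 := by simp [hg0, hgt]
  have hIpt : I ^ (1 / p) ≠ ⊤ := by simp [hg0, hgt]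
  rw [← ENNReal.mul_le_mul_iff_left hIp0 hIpt, mul_assoc, ← hsplit]
  exact htest

theorem HardyInequality.muckenhouptConstant_le [SigmaFinite μ] (hpp : p.HolderConjugate p')
    (hq : 0 < q) (hC : HardyInequality p q μ ν v C) : muckenhouptConstant p' q μ ν v ≤ C := by
  refine iSup_le fun s => ENNReal.mul_le_of_forall_lt fun a ha b hb => ?_
  rw [one_div p', ENNReal.lt_rpow_inv_iff hpp.symm.pos] at hb
  obtain ⟨g, hg, hgv, hbg, hgt⟩ := exists_measurable_lintegral_between hb
  calc a * b ≤ ν (Ici s) ^ (1 / q) * (∫⁻ x in Iic s, g x ∂μ) ^ (1 / p') := by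
        rw [one_div p']
        exact mul_le_mul' ha.le ((ENNReal.le_rpow_inv_iff hpp.symm.pos).2 hbg.le)
    _ ≤ C := hC.mul_rpow_lintegral_le hpp hq hg hgv hbg.ne_bot hgt

end Necessity

section Sufficiency

variable {α : Type*} [LinearOrder α] [TopologicalSpace α] [OrderTopology α]
  [SecondCountableTopology α] [MeasurableSpace α] {μ ν : Measure α} {v f : α → ℝ≥0∞}
  {p p' q : ℝ}

lemma ae_hardyOperator_ne_top (hpp : p.HolderConjugate p') (hq : 0 < q) (hv : Measurable v)
    (hf : Measurable f) (hA : muckenhouptConstant p' q μ ν v ≠ ⊤)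
    (hvf : ∫⁻ s, (v s * f s) ^ p ∂μ ≠ ⊤) : ∀ᵐ t ∂ν, hardyOperator μ f t ≠ ⊤ := by
  have hW : ∀ᵐ t ∂ν, hardyOperator μ (fun s => v s ^ (-p')) t ≠ ⊤ := by
    refine le_antisymm (measure_le_of_forall_measure_Ici_le fun t ht => ?_) zero_le
    exact (measure_Ici_eq_zero_of_hardyOperator_eq_top hq hpp.symm.pos hA (not_not.1 ht)).le
  have hp := hpp.pos
  have hp' := hpp.symm.pos
  filter_upwards [hW] with t ht
  have hvft : ∫⁻ s in Iic t, (v s * f s) ^ p ∂μ ≠ ⊤ :=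
    ne_top_of_le_ne_top hvf (setLIntegral_le_lintegral _ _)
  refine ne_top_of_le_ne_top (ENNReal.mul_ne_top ?_ ?_)
    (lintegral_le_weighted_Lp_mul_Lq hpp hv.aemeasurable hf.aemeasurable hvft ht)
  · exact ENNReal.rpow_ne_top_of_nonneg (by positivity) hvft
  · exact ENNReal.rpow_ne_top_of_nonneg (by positivity) ht

variable [BorelSpace α]

lemma hardyOperator_le_add_setLIntegral_lt (c : ℝ≥0∞) (t : α) :
    hardyOperator μ f t ≤ c + ∫⁻ s in Iic t ∩ hardyOperator μ f ⁻¹' Ioi c, f s ∂μ := by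
  calc hardyOperator μ f t
      ≤ ∫⁻ s in hardyOperator μ f ⁻¹' Iic c ∪ Iic t ∩ hardyOperator μ f ⁻¹' Ioi c, f s ∂μ :=
        lintegral_mono_set fun s hs => (le_or_gt (hardyOperator μ f s) c).imp id fun h => ⟨hs, h⟩
    _ ≤ _ := (lintegral_union_le _ _ _).trans <| by
        gcongr
        exact setLIntegral_le_of_forall_Iic_le fun s hs => hs

lemma two_zpow_sub_one_le_setLIntegral {t : α} {k : ℤ}
    (ht : hardyOperator μ f t ∈ Ioc (2 ^ k) (2 ^ (k + 1))) :
    2 ^ (k - 1) ≤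
      ∫⁻ s in Iic t ∩ hardyOperator μ f ⁻¹' Ioc (2 ^ (k - 1)) (2 ^ (k + 1)), f s ∂μ := by
  have hhalf : (2 : ℝ≥0∞) ^ k = 2 ^ (k - 1) + 2 ^ (k - 1) := by
    rw [← mul_two]
    simpa using ENNReal.zpow_add two_ne_zero ofNat_ne_top (k - 1) 1
  have hfin : (2 : ℝ≥0∞) ^ (k - 1) ≠ ⊤ := ENNReal.zpow_ne_top two_ne_zero ofNat_ne_top _
  have hlt := ht.1.trans_le (hardyOperator_le_add_setLIntegral_lt (2 ^ (k - 1)) t)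
  rw [hhalf, ENNReal.add_lt_add_iff_left hfin] at hlt
  refine hlt.le.trans (lintegral_mono_set fun s hs => ⟨hs.1, hs.2, ?_⟩)
  exact (hardyOperator_monotone μ f hs.1).trans ht.2

lemma two_zpow_sub_one_le_rpow_mul_rpow (hpp : p.HolderConjugate p') (hv : Measurable v)
    (hf : Measurable f) (hvf : ∫⁻ s, (v s * f s) ^ p ∂μ ≠ ⊤) {t : α} {k : ℤ}
    (ht : hardyOperator μ f t ∈ Ioc (2 ^ k) (2 ^ (k + 1)))
    (hW : hardyOperator μ (fun s => v s ^ (-p')) t ≠ ⊤) :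
    2 ^ (k - 1) ≤
      (∫⁻ s in hardyOperator μ f ⁻¹' Ioc (2 ^ (k - 1)) (2 ^ (k + 1)),
          (v s * f s) ^ p ∂μ) ^ (1 / p) *
        hardyOperator μ (fun s => v s ^ (-p')) t ^ (1 / p') := by
  set B := hardyOperator μ f ⁻¹' Ioc (2 ^ (k - 1)) (2 ^ (k + 1))
  have hp := hpp.pos
  have hp' := hpp.symm.pos
  have hWB : ∫⁻ s in Iic t ∩ B, v s ^ (-p') ∂μ ≤ hardyOperator μ (fun s => v s ^ (-p')) t :=
    lintegral_mono_set inter_subset_left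
  calc 2 ^ (k - 1) ≤ ∫⁻ s in Iic t ∩ B, f s ∂μ := two_zpow_sub_one_le_setLIntegral ht
    _ ≤ (∫⁻ s in Iic t ∩ B, (v s * f s) ^ p ∂μ) ^ (1 / p) *
          (∫⁻ s in Iic t ∩ B, v s ^ (-p') ∂μ) ^ (1 / p') :=
        lintegral_le_weighted_Lp_mul_Lq hpp hv.aemeasurable hf.aemeasurable
          (ne_top_of_le_ne_top hvf (setLIntegral_le_lintegral _ _)) (ne_top_of_le_ne_top hW hWB)
    _ ≤ _ := by
        gcongr
        exact inter_subset_right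

lemma rpow_measure_Ici_mul_two_zpow_le (hpp : p.HolderConjugate p') (hq : 0 < q)
    (hv : Measurable v) (hf : Measurable f) (hA : muckenhouptConstant p' q μ ν v ≠ ⊤)
    (hvf : ∫⁻ s, (v s * f s) ^ p ∂μ ≠ ⊤) {t : α} {k : ℤ}
    (ht : hardyOperator μ f t ∈ Ioc (2 ^ k) (2 ^ (k + 1))) :
    2 ^ (k + 1) * ν (Ici t) ^ (1 / q) ≤ 4 * muckenhouptConstant p' q μ ν v *
        (∫⁻ s in hardyOperator μ f ⁻¹' Ioc (2 ^ (k - 1)) (2 ^ (k + 1)),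
          (v s * f s) ^ p ∂μ) ^ (1 / p) := by
  set a := ∫⁻ s in hardyOperator μ f ⁻¹' Ioc (2 ^ (k - 1)) (2 ^ (k + 1)), (v s * f s) ^ p ∂μ
  set W := hardyOperator μ (fun s => v s ^ (-p')) t
  by_cases hW : W = ⊤
  · simp [measure_Ici_eq_zero_of_hardyOperator_eq_top hq hpp.symm.pos hA hW, hq]
  have hfour : (2 : ℝ≥0∞) ^ (k + 1) = 4 * 2 ^ (k - 1) := by
    rw [show k + 1 = 2 + (k - 1) by ring, ENNReal.zpow_add two_ne_zero ofNat_ne_top]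
    norm_num
  calc 2 ^ (k + 1) * ν (Ici t) ^ (1 / q)
      ≤ 4 * (a ^ (1 / p) * W ^ (1 / p')) * ν (Ici t) ^ (1 / q) := by
        rw [hfour]
        gcongr
        exact two_zpow_sub_one_le_rpow_mul_rpow hpp hv hf hvf ht hW
    _ = 4 * (ν (Ici t) ^ (1 / q) * W ^ (1 / p')) * a ^ (1 / p) := by ring
    _ ≤ 4 * muckenhouptConstant p' q μ ν v * a ^ (1 / p) := by
        gcongr
        exact le_muckenhouptConstant p' q μ ν v t

lemma two_zpow_rpow_mul_measure_le (hpp : p.HolderConjugate p') (hq : 0 < q)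
    (hv : Measurable v) (hf : Measurable f) (hA : muckenhouptConstant p' q μ ν v ≠ ⊤)
    (hvf : ∫⁻ s, (v s * f s) ^ p ∂μ ≠ ⊤) (k : ℤ) :
    (2 ^ (k + 1)) ^ q * ν (hardyOperator μ f ⁻¹' Ioc (2 ^ k) (2 ^ (k + 1))) ≤
      (4 * muckenhouptConstant p' q μ ν v) ^ q *
        (∫⁻ s in hardyOperator μ f ⁻¹' Ioc (2 ^ (k - 1)) (2 ^ (k + 1)),
          (v s * f s) ^ p ∂μ) ^ (q / p) := by
  have hc0 : (2 ^ (k + 1) : ℝ≥0∞) ^ q ≠ 0 := by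
    have := (ENNReal.zpow_pos two_ne_zero ofNat_ne_top (k + 1)).ne'
    simp [ENNReal.rpow_eq_zero_iff, this, hq.not_gt]
  have hct : (2 ^ (k + 1) : ℝ≥0∞) ^ q ≠ ⊤ :=
    ENNReal.rpow_ne_top_of_nonneg hq.le (ENNReal.zpow_ne_top two_ne_zero ofNat_ne_top _)
  rw [mul_comm, ← ENNReal.le_div_iff_mul_le (.inl hc0) (.inl hct)]
  refine measure_le_of_forall_measure_Ici_le fun t ht => ?_
  rw [ENNReal.le_div_iff_mul_le (.inl hc0) (.inl hct)]
  have := ENNReal.rpow_le_rpow (rpow_measure_Ici_mul_two_zpow_le hpp hq hv hf hA hvf ht) hq.le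
  rw [ENNReal.mul_rpow_of_nonneg _ _ hq.le, ENNReal.mul_rpow_of_nonneg _ _ hq.le,
    ← ENNReal.rpow_mul, ← ENNReal.rpow_mul, one_div_mul_cancel hq.ne', ENNReal.rpow_one,
    one_div_mul_eq_div, mul_comm] at this
  exact this

theorem lintegral_hardyOperator_rpow_le (hpp : p.HolderConjugate p') (hpq : p ≤ q)
    (hv : Measurable v) (hf : Measurable f) (hA : muckenhouptConstant p' q μ ν v ≠ ⊤)
    (hvf : ∫⁻ s, (v s * f s) ^ p ∂μ ≠ ⊤) :
    ∫⁻ t, hardyOperator μ f t ^ q ∂ν ≤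
      (4 * muckenhouptConstant p' q μ ν v) ^ q * (2 * ∫⁻ s, (v s * f s) ^ p ∂μ) ^ (q / p) := by
  have hq : 0 < q := hpp.pos.trans_le hpq
  have hqp : 1 ≤ q / p := (one_le_div hpp.pos).2 hpq
  have hH : Measurable (hardyOperator μ f) := (hardyOperator_monotone μ f).measurable
  have hzpow : Monotone fun k : ℤ => (2 : ℝ≥0∞) ^ k := fun _ _ h =>
    ENNReal.zpow_le_of_le one_le_two h
  let a (k : ℤ) : ℝ≥0∞ :=
    ∫⁻ s in hardyOperator μ f ⁻¹' Ioc (2 ^ (k - 1)) (2 ^ (k + 1)), (v s * f s) ^ p ∂μ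
  calc ∫⁻ t, hardyOperator μ f t ^ q ∂ν
      ≤ ∑' k : ℤ, (2 ^ (k + 1)) ^ q * ν (hardyOperator μ f ⁻¹' Ioc (2 ^ k) (2 ^ (k + 1))) :=
        lintegral_rpow_le_tsum_dyadic hH (ae_hardyOperator_ne_top hpp hq hv hf hA hvf) hq
    _ ≤ ∑' k, (4 * muckenhouptConstant p' q μ ν v) ^ q * a k ^ (q / p) :=
        ENNReal.tsum_le_tsum (two_zpow_rpow_mul_measure_le hpp hq hv hf hA hvf)
    _ ≤ (4 * muckenhouptConstant p' q μ ν v) ^ q * (∑' k, a k) ^ (q / p) := by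
        rw [ENNReal.tsum_mul_left]
        gcongr
        exact tsum_rpow_le_rpow_tsum a hqp
    _ ≤ _ := by
        gcongr
        exact tsum_setLIntegral_preimage_Ioc_le hH hzpow _

-- The summand `1` keeps the constant positive, as `0 * ⊤ = 0`.
theorem hardyInequality_of_muckenhouptConstant_ne_top (hpp : p.HolderConjugate p') (hpq : p ≤ q)
    (hv : Measurable v) (hA : muckenhouptConstant p' q μ ν v ≠ ⊤) :
    HardyInequality p q μ ν v (4 * muckenhouptConstant p' q μ ν v * 2 ^ (1 / p) + 1) := by
  intro F hF
  have hp := hpp.pos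
  have hq : 0 < q := hp.trans_le hpq
  have hexp : q / p * (1 / q) = 1 / p := by field_simp
  by_cases hvF : ∫⁻ t, (v t * F t) ^ p ∂μ = ⊤
  · rw [hvF, ENNReal.top_rpow_of_pos (by positivity), ENNReal.mul_top (by simp)]
    exact le_top
  calc (∫⁻ t, hardyOperator μ (fun s => F s) t ^ q ∂ν) ^ (1 / q)
      ≤ ((4 * muckenhouptConstant p' q μ ν v) ^ q *
          (2 * ∫⁻ t, (v t * F t) ^ p ∂μ) ^ (q / p)) ^ (1 / q) := by
        gcongr
        exact lintegral_hardyOperator_rpow_le hpp hpq hv hF.coe_nnreal_ennreal hA hvF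
    _ = 4 * muckenhouptConstant p' q μ ν v * 2 ^ (1 / p) *
          (∫⁻ t, (v t * F t) ^ p ∂μ) ^ (1 / p) := by
        rw [ENNReal.mul_rpow_of_nonneg _ _ (by positivity), ← ENNReal.rpow_mul, ← ENNReal.rpow_mul,
          mul_one_div_cancel hq.ne', ENNReal.rpow_one, hexp,
          ENNReal.mul_rpow_of_nonneg _ _ (by positivity), ← mul_assoc]
    _ ≤ _ := by
        gcongr
        exact le_self_add

end Sufficiency

section HalfLine

lemma hardyOperator_restrict_Ioi (f : ℝ → ℝ≥0∞) (t : ℝ) :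
    hardyOperator (volume.restrict (Ioi 0)) f t = ∫⁻ s in Ioo 0 t, f s := by
  rw [hardyOperator, Measure.restrict_restrict measurableSet_Iic, Iic_inter_Ioi,
    restrict_Ioo_eq_restrict_Ioc]

lemma withDensity_restrict_Ioi_apply_Ici (f : ℝ → ℝ≥0∞) {s : ℝ} (hs : 0 < s) :
    (volume.restrict (Ioi 0)).withDensity f (Ici s) = ∫⁻ t in Ioi s, f t := by
  rw [withDensity_apply f measurableSet_Ici, Measure.restrict_restrict measurableSet_Ici,
    inter_eq_left.2 (Ici_subset_Ioi.2 hs), restrict_Ioi_eq_restrict_Ici]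

lemma hardyInequality_halfLine_iff {p q : ℝ} (hq : 0 ≤ q) {U : ℝ → ℝ≥0∞} (hU : Measurable U)
    (V : ℝ → ℝ≥0∞) (C : ℝ≥0∞) :
    HardyInequality p q (volume.restrict (Ioi 0))
        ((volume.restrict (Ioi 0)).withDensity fun t => U t ^ q) V C ↔
      ∀ F : ℝ → ℝ, Measurable F → (∀ t, 0 ≤ F t) →
        (∫⁻ t in Ioi (0 : ℝ), (U t * ∫⁻ s in Ioo (0 : ℝ) t, ENNReal.ofReal (F s)) ^ q) ^ (1 / q) ≤
          C * (∫⁻ t in Ioi (0 : ℝ), (V t * ENNReal.ofReal (F t)) ^ p) ^ (1 / p) := by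
  have hleft (f : ℝ → ℝ≥0∞) : ∫⁻ t, hardyOperator (volume.restrict (Ioi 0)) f t ^ q
        ∂(volume.restrict (Ioi 0)).withDensity (fun t => U t ^ q) =
      ∫⁻ t in Ioi (0 : ℝ), (U t * ∫⁻ s in Ioo (0 : ℝ) t, f s) ^ q := by
    rw [lintegral_withDensity_eq_lintegral_mul _ (hU.pow_const q)
      ((hardyOperator_monotone _ f).measurable.pow_const q)]
    simp only [Pi.mul_apply, hardyOperator_restrict_Ioi, ENNReal.mul_rpow_of_nonneg _ _ hq]
  simp only [HardyInequality, hleft]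
  constructor
  · exact fun h F hF _ => h (fun t => (F t).toNNReal) hF.real_toNNReal
  · intro h F hF
    simpa only [ENNReal.ofReal_coe_nnreal] using
      h (fun t => F t) hF.coe_nnreal_real fun t => (F t).coe_nonneg

lemma muckenhouptConstant_halfLine_le_iff {p' q : ℝ} (hp' : 0 < p') (U V : ℝ → ℝ≥0∞)
    (M : ℝ≥0∞) :
    muckenhouptConstant p' q (volume.restrict (Ioi 0))
        ((volume.restrict (Ioi 0)).withDensity fun t => U t ^ q) V ≤ M ↔
      ∀ s : ℝ, 0 < s → (∫⁻ t in Ioi s, U t ^ q) ^ (1 / q) *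
        (∫⁻ t in Ioo (0 : ℝ) s, V t ^ (-p')) ^ (1 / p') ≤ M := by
  rw [muckenhouptConstant, iSup_le_iff]
  refine forall_congr' fun s => ?_
  rw [hardyOperator_restrict_Ioi]
  rcases lt_or_ge 0 s with hs | hs
  · simp only [withDensity_restrict_Ioi_apply_Ici _ hs, hs, forall_true_left]
  · simp [hp', hs.not_gt]

end HalfLine

theorem stmt3_general {α : Type*} [LinearOrder α] [TopologicalSpace α] [OrderTopology α]
    [SecondCountableTopology α] [MeasurableSpace α] [BorelSpace α] {μ : Measure α} [SigmaFinite μ]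
    (ν : Measure α) {v : α → ℝ≥0∞} (hv : Measurable v) {p p' q : ℝ} (hpp : p.HolderConjugate p')
    (hpq : p ≤ q) :
    (∃ C : ℝ, 0 < C ∧ HardyInequality p q μ ν v (ENNReal.ofReal C)) ↔
      ∃ M : ℝ, muckenhouptConstant p' q μ ν v ≤ ENNReal.ofReal M := by
  constructor
  · rintro ⟨C, -, hC⟩
    exact ⟨C, hC.muckenhouptConstant_le hpp (hpp.pos.trans_le hpq)⟩
  · rintro ⟨M, hM⟩
    have hA := ne_top_of_le_ne_top ofReal_ne_top hM
    have hC := hardyInequality_of_muckenhouptConstant_ne_top hpp hpq hv hA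
    have hCt : 4 * muckenhouptConstant p' q μ ν v * 2 ^ (1 / p) + 1 ≠ ⊤ := by
      have := hpp.pos
      finiteness
    exact ⟨_, toReal_pos (by simp) hCt, by rwa [ofReal_toReal hCt]⟩

/-- weighted Hardy inequality of Muckenhoupt and Bradley. For
`1 < p ≤ q < ∞`, the inequality
`(∫₀^∞ (u(t) ∫₀^t F)^q dt)^{1/q} ≤ C (∫₀^∞ (v F)^p dt)^{1/p}` holds for all non-negative
measurable `F` iff `sup_{s>0} (∫_s^∞ u^q)^{1/q} (∫₀^s v^{-p'})^{1/p'} < ∞`. -/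
theorem stmt3 (p q p' : ℝ) (hp : 1 < p) (hpq : p ≤ q) (hp'def : p' = p / (p - 1))
    (u v : ℝ → ℝ) (hu : Measurable u) (hv : Measurable v)
    (hu0 : ∀ t ∈ Ioi (0:ℝ), 0 ≤ u t) (hv0 : ∀ t ∈ Ioi (0:ℝ), 0 ≤ v t) :
    (∃ C : ℝ, 0 < C ∧ ∀ F : ℝ → ℝ, Measurable F → (∀ t, 0 ≤ F t) →
      (∫⁻ t in Ioi (0:ℝ),
          (ENNReal.ofReal (u t) * ∫⁻ s in Ioo (0:ℝ) t, ENNReal.ofReal (F s)) ^ q) ^ (1/q)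
        ≤ ENNReal.ofReal C *
          (∫⁻ t in Ioi (0:ℝ), (ENNReal.ofReal (v t) * ENNReal.ofReal (F t)) ^ p) ^ (1/p))
    ↔ (∃ M : ℝ, ∀ s : ℝ, 0 < s →
      (∫⁻ t in Ioi s, ENNReal.ofReal (u t) ^ q) ^ (1/q) *
      (∫⁻ t in Ioo (0:ℝ) s, ENNReal.ofReal (v t) ^ (-p')) ^ (1/p')
        ≤ ENNReal.ofReal M) := by
  have hpp : p.HolderConjugate p' := hp'def ▸ Real.HolderConjugate.conjExponent hp
  simpa only [hardyInequality_halfLine_iff (hpp.nonneg.trans hpq) hu.ennreal_ofReal,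
    muckenhouptConstant_halfLine_le_iff hpp.symm.pos] using
    stmt3_general (μ := volume.restrict (Ioi 0))
      ((volume.restrict (Ioi 0)).withDensity fun t => ENNReal.ofReal (u t) ^ q)
      hv.ennreal_ofReal hpp hpq
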